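/- Let q⁰, q¹, …, qᵐ be pairwise mutually singular probability measures on a measurable space X and b ∈ ℝᵐ with Σᵢ e^{−bᵢ} < 1. Then the dual function g(λ) = inf over probability measures p of [KL(q⁰‖p) + Σᵢ λᵢ (KL(qⁱ‖p) − bᵢ)] has a unique maximizer λ* over ℝ₊ᵐ, characterized by λ*ᵢ/(1 + Σⱼ λ*ⱼ) = e^{−bᵢ} for all i = 1, …, m; explicitly, λ*ᵢ = e^{−bᵢ}/(1 − Σⱼ e^{−bⱼ}). (In the paper's notation with thresholds b̄ᵢ = bᵢ + hᵢ, where hᵢ is the differential entropy of qⁱ, this reads λ*ᵢ/(1 + λ*ᵀ𝟏) = e^{hᵢ − b̄ᵢ}.) -/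

import Mathlib

open MeasureTheory

/-- The Kullback–Leibler divergence `KL(μ‖ν)`, with values in `EReal`. -/
noncomputable def KL {X : Type*} [MeasurableSpace X] (μ ν : Measure X) : EReal :=
  open Classical in
  if μ ≪ ν ∧ Integrable (llr μ ν) μ then ((∫ x, llr μ ν x ∂μ : ℝ) : EReal) else ⊤

/-- The dual function `g(λ) = inf over probability measures p of
`KL(q⁰‖p) + ∑ i, λ i * (KL(qⁱ‖p) − b i)`. -/
noncomputable def dualFn {X : Type*} [MeasurableSpace X] {m : ℕ}
    (q0 : Measure X) (qi : Fin m → Measure X) (b : Fin m → ℝ) (l : Fin m → ℝ) : EReal :=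
  ⨅ p : {p : Measure X // IsProbabilityMeasure p},
    KL q0 p.1 + ∑ i, (l i : EReal) * (KL (qi i) p.1 - (b i : EReal))

lemma aux_llr_add {X : Type*} [MeasurableSpace X] (μ ν ν' : Measure X) [IsFiniteMeasure μ]
    [IsFiniteMeasure ν] [IsFiniteMeasure ν'] (h : μ ≪ ν) (hs : μ ⟂ₘ ν') :
    llr μ (ν + ν') =ᵐ[μ] llr μ ν := by
  obtain ⟨s, hsm, hs1, hs2⟩ := hs
  have hd : ν + ν' = ν.restrict sᶜ + (ν.restrict s + ν') := by
    rw [← add_assoc, add_comm (ν.restrict sᶜ), Measure.restrict_add_restrict_compl hsm]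
  have hd2 : ν = ν.restrict sᶜ + ν.restrict s := by
    rw [add_comm, Measure.restrict_add_restrict_compl hsm]
  have hac : μ ≪ ν.restrict sᶜ := by
    refine Measure.AbsolutelyContinuous.mk fun t ht h0 => ?_
    rw [Measure.restrict_apply ht] at h0
    have := h h0
    refine measure_mono_null (t := (t ∩ sᶜ) ∪ s) ?_ (measure_union_null this hs1)
    intro x hx
    by_cases hxs : x ∈ s
    · exact Or.inr hxs
    · exact Or.inl ⟨hx, hxs⟩
  have e1 : μ.rnDeriv (ν + ν') =ᵐ[ν.restrict sᶜ] μ.rnDeriv (ν.restrict sᶜ) := by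
    rw [hd]
    refine Measure.rnDeriv_add_right_of_mutuallySingular' ?_ ?_
    · exact ⟨s, hsm, hs1, by simp [hsm, hs2]⟩
    · exact ⟨s, hsm, by simp [hsm], by simp [hsm, hs2]⟩
  have e2 : μ.rnDeriv ν =ᵐ[ν.restrict sᶜ] μ.rnDeriv (ν.restrict sᶜ) := by
    conv_lhs => rw [hd2]
    refine Measure.rnDeriv_add_right_of_mutuallySingular' ?_ ?_
    · exact ⟨s, hsm, hs1, by simp [hsm]⟩
    · exact ⟨s, hsm, by simp [hsm], by simp [hsm]⟩
  filter_upwards [hac.ae_le e1, hac.ae_le e2] with x h1 h2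
  simp [llr, h1, h2]

lemma aux_KL_mix {X : Type*} [MeasurableSpace X] (μ ν' : Measure X) [IsProbabilityMeasure μ]
    [IsFiniteMeasure ν'] (hs : μ ⟂ₘ ν') (c : ℝ) (hc : 0 < c) :
    KL μ (ENNReal.ofReal c • μ + ν') = ((-Real.log c : ℝ) : EReal) := by
  have hc0 : ENNReal.ofReal c ≠ 0 := by simpa using hc
  have : IsFiniteMeasure (ENNReal.ofReal c • μ) := Measure.smul_finite _ (by simp)
  have hac : μ ≪ ENNReal.ofReal c • μ := Measure.absolutelyContinuous_smul hc0
  have e : llr μ (ENNReal.ofReal c • μ + ν') =ᵐ[μ] fun _ => -Real.log c := by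
    filter_upwards [aux_llr_add μ _ ν' hac hs,
      llr_smul_right (Measure.AbsolutelyContinuous.refl μ) (ENNReal.ofReal c) hc0 (by simp),
      llr_self μ] with x h1 h2 h3
    rw [h1, h2, h3]
    simp [ENNReal.toReal_ofReal hc.le]
  have hi : Integrable (llr μ (ENNReal.ofReal c • μ + ν')) μ :=
    (integrable_congr e).2 (integrable_const _)
  unfold KL
  rw [if_pos ⟨hac.add_right _, hi⟩, integral_congr_ae e]
  simp

lemma aux_KL_lower {X : Type*} [MeasurableSpace X] (μ p : Measure X) [IsProbabilityMeasure μ]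
    [IsProbabilityMeasure p] (A : Set X) (hA : MeasurableSet A) (h : μ Aᶜ = 0) (c : ℝ)
    (hc : 0 < c) :
    ((1 - c * p.real A + Real.log c : ℝ) : EReal) ≤ KL μ p := by
  unfold KL
  split_ifs with hh
  swap
  · exact le_top
  obtain ⟨hac, hi⟩ := hh
  rw [EReal.coe_le_coe_iff]
  have hacA : μ ≪ p.restrict A := by
    refine Measure.AbsolutelyContinuous.mk fun t ht h0 => ?_
    rw [Measure.restrict_apply ht] at h0
    refine measure_mono_null (t := (t ∩ A) ∪ Aᶜ) ?_ (measure_union_null (hac h0) h)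
    intro x hx
    by_cases hxs : x ∈ A
    · exact Or.inl ⟨hx, hxs⟩
    · exact Or.inr hxs
  have hpA : 0 < p.real A := by
    rw [measureReal_def]
    refine ENNReal.toReal_pos ?_ (by simp)
    intro h0
    have h1 := measure_union_null (hac h0) h
    simp at h1
  have e : llr μ p =ᵐ[μ] llr μ (p.restrict A) := by
    conv_lhs => rw [← Measure.restrict_add_restrict_compl (μ := p) hA]
    exact aux_llr_add μ _ _ hacA ⟨Aᶜ, hA.compl, h, by simp [hA]⟩
  have key := InformationTheory.integral_llr_add_mul_log_nonneg hacA ((integrable_congr e).1 hi)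
  rw [← integral_congr_ae e] at key
  have h2 := Real.log_le_sub_one_of_pos (mul_pos hc hpA)
  rw [Real.log_mul hc.ne' hpA.ne'] at h2
  simp at key
  linarith

lemma aux_sum_coe {ι : Type*} (s : Finset ι) (f : ι → ℝ) :
    ((∑ i ∈ s, f i : ℝ) : EReal) = ∑ i ∈ s, (f i : EReal) := by
  classical
  induction s using Finset.induction_on with
  | empty => simp
  | insert a s ha ih => rw [Finset.sum_insert ha, Finset.sum_insert ha, EReal.coe_add, ih]

lemma aux_sets {X : Type*} [MeasurableSpace X] {ι : Type*} [Finite ι] (Q : ι → Measure X)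
    (h : Pairwise fun i j => Q i ⟂ₘ Q j) :
    ∃ A : ι → Set X, (∀ i, MeasurableSet (A i)) ∧ (∀ i, Q i (A i)ᶜ = 0) ∧
      Pairwise (Function.onFun Disjoint A) := by
  classical
  have : ∀ i j, ∃ s, MeasurableSet s ∧ (i ≠ j → Q i s = 0 ∧ Q j sᶜ = 0) := by
    intro i j
    by_cases hij : i = j
    · exact ⟨∅, by simp, fun h => absurd hij h⟩
    · obtain ⟨s, h1, h2, h3⟩ := h hij
      exact ⟨s, h1, fun _ => ⟨h2, h3⟩⟩
  choose N hN hN2 using this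
  refine ⟨fun i => ⋂ j, ⋂ (_ : i ≠ j), ((N i j)ᶜ ∩ N j i), fun i => ?_, fun i => ?_, ?_⟩
  · exact MeasurableSet.iInter fun j => MeasurableSet.iInter fun _ => (hN i j).compl.inter (hN j i)
  · simp only [Set.compl_iInter, Set.compl_inter, compl_compl]
    refine measure_iUnion_null fun j => measure_iUnion_null fun hij => ?_
    exact measure_union_null (hN2 i j hij).1 (hN2 j i hij.symm).2
  · intro i j hij
    refine Set.disjoint_left.2 fun x hx hy => ?_
    simp only [Set.mem_iInter] at hx hy
    exact (hx j hij).1 (hy i hij.symm).2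

lemma aux_upper {X : Type*} [MeasurableSpace X] {m : ℕ}
    (q0 : Measure X) [IsProbabilityMeasure q0]
    (qi : Fin m → Measure X) (hqi : ∀ i, IsProbabilityMeasure (qi i))
    (hsing0 : ∀ i, q0 ⟂ₘ qi i)
    (hsing : Pairwise fun i j => qi i ⟂ₘ qi j)
    (b l w : Fin m → ℝ) (hw : ∀ i, 0 < w i) (hw1 : ∑ i, w i < 1) :
    dualFn q0 qi b l ≤
      ((-Real.log (1 - ∑ i, w i) + ∑ i, l i * (-Real.log (w i) - b i) : ℝ) : EReal) := by
  classical
  set p : Measure X := ENNReal.ofReal (1 - ∑ i, w i) • q0 + ∑ i, ENNReal.ofReal (w i) • qi i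
    with hp
  have hfin : ∀ i, IsFiniteMeasure (ENNReal.ofReal (w i) • qi i) := fun i =>
    Measure.smul_finite _ (by simp)
  have hfin0 : IsFiniteMeasure (ENNReal.ofReal (1 - ∑ i, w i) • q0) :=
    Measure.smul_finite _ (by simp)
  have hprob : IsProbabilityMeasure p := by
    constructor
    simp only [hp, Measure.add_apply, Measure.smul_apply, Measure.finsetSum_apply, measure_univ,
      smul_eq_mul, mul_one]
    rw [← ENNReal.ofReal_sum_of_nonneg (fun i _ => (hw i).le), ← ENNReal.ofReal_add (by linarith)
      (Finset.sum_nonneg fun i _ => (hw i).le)]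
    simp
  have hsum : ∀ (μ : Measure X) (s : Finset (Fin m)), (∀ i ∈ s, μ ⟂ₘ qi i) →
      μ ⟂ₘ ∑ i ∈ s, ENNReal.ofReal (w i) • qi i := by
    intro μ s
    induction s using Finset.induction_on with
    | empty => intro _; simp
    | insert a s ha ih =>
      intro h
      rw [Finset.sum_insert ha]
      exact Measure.MutuallySingular.add_right
        ((h a (by simp)).symm.smul _).symm (ih fun i hi => h i (by simp [hi]))
  have h0 : KL q0 p = ((-Real.log (1 - ∑ i, w i) : ℝ) : EReal) :=
    aux_KL_mix q0 _ (hsum _ _ fun i _ => hsing0 i) _ (by linarith)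
  have hi : ∀ i, KL (qi i) p = ((-Real.log (w i) : ℝ) : EReal) := by
    intro i
    have : p = ENNReal.ofReal (w i) • qi i + (ENNReal.ofReal (1 - ∑ i, w i) • q0 +
        ∑ j ∈ Finset.univ.erase i, ENNReal.ofReal (w j) • qi j) := by
      rw [hp, ← Finset.add_sum_erase Finset.univ (fun j => ENNReal.ofReal (w j) • qi j)
        (Finset.mem_univ i), add_left_comm]
    rw [this]
    refine aux_KL_mix (qi i) _ ?_ _ (hw i)
    refine Measure.MutuallySingular.add_right ((hsing0 i).smul _).symm (hsum _ _ ?_)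
    intro j hj
    exact hsing (Finset.ne_of_mem_erase hj).symm
  refine (iInf_le _ ⟨p, hprob⟩).trans (le_of_eq ?_)
  simp only [h0, hi]
  rw [EReal.coe_add, aux_sum_coe]
  simp [EReal.coe_mul, EReal.coe_sub]

lemma aux_lower {X : Type*} [MeasurableSpace X] {m : ℕ}
    (q0 : Measure X) [IsProbabilityMeasure q0]
    (qi : Fin m → Measure X) (hqi : ∀ i, IsProbabilityMeasure (qi i))
    (hsing0 : ∀ i, q0 ⟂ₘ qi i)
    (hsing : Pairwise fun i j => qi i ⟂ₘ qi j)
    (b : Fin m → ℝ) (hb : ∑ i, Real.exp (-b i) < 1)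
    (lstar : Fin m → ℝ)
    (hlstar : ∀ i, lstar i = Real.exp (-b i) / (1 - ∑ j, Real.exp (-b j))) :
    ((-Real.log (1 - ∑ i, Real.exp (-b i)) : ℝ) : EReal) ≤ dualFn q0 qi b lstar := by
  obtain ⟨A, hAm, hA0, hAd⟩ := aux_sets (fun o : Option (Fin m) => o.elim q0 qi) (by
    rintro (_ | i) (_ | j) hij
    · exact absurd rfl hij
    · exact hsing0 j
    · exact (hsing0 i).symm
    · exact hsing (fun h => hij (by rw [h])))
  set W := 1 - ∑ i, Real.exp (-b i) with hW
  have hWpos : 0 < W := by linarith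
  refine le_iInf fun ⟨p, hpp⟩ => ?_
  have hpsum : p.real (A none) + ∑ i, p.real (A (some i)) ≤ 1 := by
    have h1 := measureReal_iUnion_fintype (μ := p) hAd hAm
    rw [Fintype.sum_option] at h1
    rw [← h1]
    exact measureReal_le_one
  have h0 := aux_KL_lower q0 p (A none) (hAm _) (hA0 none) W⁻¹ (inv_pos.2 hWpos)
  have hi : ∀ i, ((lstar i * (1 - Real.exp (b i) * p.real (A (some i))) : ℝ) : EReal) ≤
      (lstar i : EReal) * (KL (qi i) p - (b i : EReal)) := by
    intro i
    have := hqi i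
    have h1 := aux_KL_lower (qi i) p (A (some i)) (hAm _) (hA0 (some i)) (Real.exp (b i))
      (Real.exp_pos _)
    have hl : 0 ≤ lstar i := by rw [hlstar]; positivity
    rw [EReal.coe_mul]
    refine mul_le_mul_of_nonneg_left ?_ (by exact_mod_cast hl)
    have h2 := EReal.sub_le_sub h1 (le_refl (b i : EReal))
    rw [← EReal.coe_sub, Real.log_exp, add_sub_cancel_right] at h2
    exact h2
  refine le_trans ?_ (add_le_add h0 (Finset.sum_le_sum fun i _ => hi i))
  rw [← aux_sum_coe, ← EReal.coe_add, EReal.coe_le_coe_iff, Real.log_inv]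
  have h3 : ∀ i, lstar i * (1 - Real.exp (b i) * p.real (A (some i))) =
      W⁻¹ * (Real.exp (-b i) - p.real (A (some i))) := by
    intro i
    rw [hlstar, Real.exp_neg]
    have := Real.exp_pos (b i)
    field_simp
  simp only [h3]
  rw [← Finset.mul_sum, Finset.sum_sub_distrib]
  have h4 : 0 ≤ W⁻¹ * (1 - p.real (A none) - ∑ i, p.real (A (some i))) :=
    mul_nonneg (inv_pos.2 hWpos).le (by linarith)
  have h5 : W⁻¹ * (∑ i, Real.exp (-b i)) = W⁻¹ - 1 := by
    have : ∑ i, Real.exp (-b i) = 1 - W := by rw [hW]; ring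
    rw [this]; field_simp
  rw [mul_sub, h5]
  rw [mul_sub, mul_sub] at h4
  linarith

/-- for pairwise mutually singular probability measures `q⁰, …, qᵐ` and
thresholds `b` with `∑ i, e^{−bᵢ} < 1`, the dual function has a unique maximizer `λ*`
over `ℝ₊ᵐ`, characterized by `λ*ᵢ / (1 + ∑ j λ*ⱼ) = e^{−bᵢ}`, and given explicitly by
`λ*ᵢ = e^{−bᵢ} / (1 − ∑ j e^{−bⱼ})`. -/
theorem stmt8 {X : Type*} [MeasurableSpace X] {m : ℕ}
    (q0 : Measure X) [IsProbabilityMeasure q0]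
    (qi : Fin m → Measure X) (hqi : ∀ i, IsProbabilityMeasure (qi i))
    (hsing0 : ∀ i, q0 ⟂ₘ qi i)
    (hsing : Pairwise fun i j => qi i ⟂ₘ qi j)
    (b : Fin m → ℝ) (hb : ∑ i, Real.exp (-b i) < 1)
    (lstar : Fin m → ℝ)
    (hlstar : ∀ i, lstar i = Real.exp (-b i) / (1 - ∑ j, Real.exp (-b j))) :
    (∀ i, 0 ≤ lstar i) ∧
    (∀ l : Fin m → ℝ, (∀ i, 0 ≤ l i) → dualFn q0 qi b l ≤ dualFn q0 qi b lstar) ∧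
    (∀ l : Fin m → ℝ, (∀ i, 0 ≤ l i) →
      dualFn q0 qi b l = dualFn q0 qi b lstar → l = lstar) ∧
    (∀ i, lstar i / (1 + ∑ j, lstar j) = Real.exp (-b i)) := by
  have hWpos : 0 < 1 - ∑ i, Real.exp (-b i) := by linarith
  have hup : ∀ l : Fin m → ℝ, dualFn q0 qi b l ≤
      ((-Real.log (1 - ∑ i, Real.exp (-b i)) : ℝ) : EReal) := by
    intro l
    have := aux_upper q0 qi hqi hsing0 hsing b l (fun i => Real.exp (-b i))
      (fun i => Real.exp_pos _) hb
    simpa using this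
  have hlow := aux_lower q0 qi hqi hsing0 hsing b hb lstar hlstar
  refine ⟨fun i => ?_, fun l _ => (hup l).trans hlow, fun l _ hl => ?_, fun i => ?_⟩
  · rw [hlstar]; exact div_nonneg (Real.exp_pos _).le hWpos.le
  · ext k
    set W := 1 - ∑ i, Real.exp (-b i) with hW
    let f : ℝ → ℝ := fun t => -Real.log (W - t) + l k * (-Real.log (Real.exp (-b k) + t) - b k)
    have hd : HasDerivAt f (-((-1) / (W - 0)) + l k * (-(1 / (Real.exp (-b k) + 0)))) 0 := by
      have h1 : HasDerivAt (fun t : ℝ => W - t) (-1) 0 := (hasDerivAt_id 0).const_sub W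
      have h2 : HasDerivAt (fun t : ℝ => Real.exp (-b k) + t) 1 0 :=
        (hasDerivAt_id 0).const_add _
      exact (h1.log (by simpa using hWpos.ne')).neg.add
        (((h2.log (by simpa using (Real.exp_pos (-b k)).ne')).neg.sub_const _).const_mul _)
    have hf0 : f 0 = -Real.log W := by simp [f]
    have hmin : IsLocalMin f 0 := by
      have e1 : ∀ᶠ t : ℝ in nhds 0, t < W := eventually_lt_nhds hWpos
      have e2 : ∀ᶠ t : ℝ in nhds 0, -Real.exp (-b k) < t :=
        eventually_gt_nhds (by simpa using Real.exp_pos (-b k))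
      filter_upwards [e1, e2] with t h1 h2
      rw [hf0]
      have hs : ∑ i, (Real.exp (-b i) + if i = k then t else 0) = (1 - W) + t := by
        rw [Finset.sum_add_distrib]
        simp [hW]
      have h3 := aux_upper q0 qi hqi hsing0 hsing b l
        (fun i => Real.exp (-b i) + if i = k then t else 0)
        (fun i => by
          by_cases hik : i = k
          · subst hik; simp; linarith
          · simp [hik, Real.exp_pos]) (by rw [hs]; linarith)
      rw [hl] at h3
      have h4 := hlow.trans h3
      rw [EReal.coe_le_coe_iff, hs, Finset.sum_eq_single k (fun i _ hik => by simp [hik])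
        (by simp)] at h4
      have h5 : 1 - (1 - W + t) = W - t := by ring
      rw [h5] at h4
      simpa [f] using h4
    have hz := hmin.hasDerivAt_eq_zero hd
    rw [hlstar k]
    have hE := Real.exp_pos (-b k)
    rw [sub_zero, add_zero] at hz
    field_simp at hz ⊢
    linarith
  · have hsum : 1 + ∑ j, lstar j = 1 / (1 - ∑ i, Real.exp (-b i)) := by
      simp only [hlstar]
      rw [← Finset.sum_div]
      field_simp
      ring
    rw [hsum, hlstar]
    field_simp
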